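/- In the online Ramsey game with targets red C₄ and blue P₆, consider the position in which the five edges v₁v₂, v₂v₃, v₃v₄, v₄v₅, v₅v₆ of a path on six distinct vertices have been colored blue, red, blue, blue, red respectively (case B7). From this position Builder can force a red copy of C₄ or a blue copy of P₆ within at most 6 additional rounds, so within at most 11 rounds in total. -/

import Mathlib

open SimpleGraph

/-- The set `S` of edges of the infinite complete graph on `ℕ` contains a copy of
the graph `G`: there is an injective map of the vertices of `G` into `ℕ` sending
every edge of `G` into `S`. -/
def HasCopy {V : Type*} (G : SimpleGraph V) (S : Set (Sym2 ℕ)) : Prop :=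
  ∃ f : V → ℕ, Function.Injective f ∧ ∀ a b, G.Adj a b → s(f a, f b) ∈ S

/-- `BuilderWinsIn G H R B r` means: in the online Ramsey game with targets a red copy
of `G` and a blue copy of `H`, from the position in which the edges in `R` have been
colored red and the edges in `B` have been colored blue, Builder has a strategy that
guarantees, against every Painter strategy, that within at most `r` further rounds the
colored edges contain a red copy of `G` or a blue copy of `H`.  (In each round Builder
chooses a previously unchosen non-loop edge of the infinite complete graph on `ℕ`, and
Painter immediately colors it red or blue; so Builder wins within `r + 1` rounds iff he
has already won, or he can choose an edge such that whichever color Painter gives it,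
he can win within `r` further rounds.) -/
def BuilderWinsIn {V W : Type*} (G : SimpleGraph V) (H : SimpleGraph W) :
    Set (Sym2 ℕ) → Set (Sym2 ℕ) → ℕ → Prop
  | R, B, 0 => HasCopy G R ∨ HasCopy H B
  | R, B, (r + 1) => HasCopy G R ∨ HasCopy H B ∨
      ∃ e : Sym2 ℕ, ¬ e.IsDiag ∧ e ∉ R ∧ e ∉ B ∧
        BuilderWinsIn G H (insert e R) B r ∧ BuilderWinsIn G H R (insert e B) r

/-- The online size Ramsey number `ř(G, H)`: the least `t` such that, starting from the
empty position, Builder can force a red copy of `G` or a blue copy of `H` within at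
most `t` rounds. -/
noncomputable def onlineRamsey {V W : Type*} (G : SimpleGraph V) (H : SimpleGraph W) : ℕ :=
  sInf {t | BuilderWinsIn G H ∅ ∅ t}

/-!
An edge that would complete a blue copy of the target if colored blue is a threat: Painter has to
color it red. If two disjoint blue paths have together as many vertices as the blue target path,
each of the four edges joining an end `a`, `c` of the first to an end `x`, `y` of the second is a
threat, and these edges form the 4-cycle `a x c y`. The same happens for one blue path with ends
`a`, `c`, one vertex short of the target, and two vertices `x`, `y` off it.

In case `B7` Builder first plays `v₂v₅`. If it is blue, `v₁v₂v₅v₄v₃` is a blue `P₅`, and Builder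
joins its ends to `v₆` and to a fresh vertex. If it is red, Builder plays `v₃v₆`; red would close
the 4-cycle `v₂v₃v₆v₅`, and blue gives the blue `P₄` `v₅v₄v₃v₆` disjoint from `v₁v₂`. One of the
four joining edges, `v₂v₅`, is then already red.
-/

section Copies

variable {V : Type*} {G : SimpleGraph V} {S : Set (Sym2 ℕ)}

lemma hasCopy_iff_isContained : HasCopy G S ↔ G ⊑ fromEdgeSet S := by
  constructor
  · rintro ⟨f, hf, hS⟩
    exact ⟨⟨f, fun {a b} hab => (fromEdgeSet_adj S).2 ⟨hS a b hab, hf.ne hab.ne⟩⟩, hf⟩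
  · rintro ⟨f⟩
    exact ⟨f, f.injective, fun a b hab => ((fromEdgeSet_adj S).1 (f.toHom.map_adj hab)).1⟩

lemma hasCopy_insert_of_isDiag {e : Sym2 ℕ} (he : e.IsDiag) :
    HasCopy G (insert e S) ↔ HasCopy G S := by
  have hgraph : fromEdgeSet (insert e S) = fromEdgeSet S := by
    ext a b
    simp only [fromEdgeSet_adj, Set.mem_insert_iff]
    grind [Sym2.mk_isDiag_iff]
  rw [hasCopy_iff_isContained, hasCopy_iff_isContained, hgraph]

lemma hasCopy_cycleGraph_four {a b c d : ℕ} (hnodup : [a, b, c, d].Nodup)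
    (hab : s(a, b) ∈ S) (hbc : s(b, c) ∈ S) (hcd : s(c, d) ∈ S) (hda : s(d, a) ∈ S) :
    HasCopy (cycleGraph 4) S := by
  have hadj {u w : ℕ} (huw : s(u, w) ∈ S) (hne : u ≠ w) : (fromEdgeSet S).Adj u w :=
    (fromEdgeSet_adj S).2 ⟨huw, hne⟩
  simp only [List.nodup_cons, List.mem_cons, List.not_mem_nil, or_false, not_or] at hnodup
  obtain ⟨⟨nab, nac, nad⟩, ⟨nbc, nbd⟩, ncd, -⟩ := hnodup
  refine hasCopy_iff_isContained.2 ((cycleGraph_isContained_iff (by norm_num)).2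
    ⟨a, .cons (hadj hab nab) (.cons (hadj hbc nbc) (.cons (hadj hcd ncd)
      (hadj hda (Ne.symm nad)).toWalk)), ?_, rfl⟩)
  simp [Walk.cons_isCycle_iff, Walk.isPath_def, *, Ne.symm]

lemma hasCopy_pathGraph_insert {a c x y : ℕ} {p : (fromEdgeSet S).Walk a c}
    {q : (fromEdgeSet S).Walk x y} (hp : p.IsPath) (hq : q.IsPath)
    (hpq : p.support.Disjoint q.support) :
    HasCopy (pathGraph (p.length + q.length + 2)) (insert s(c, x) S) := by
  have hle : fromEdgeSet S ≤ fromEdgeSet (insert s(c, x) S) :=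
    fromEdgeSet_mono (Set.subset_insert _ _)
  have hcx : (fromEdgeSet (insert s(c, x) S)).Adj c x :=
    (fromEdgeSet_adj _).2 ⟨Set.mem_insert _ _, fun h => hpq p.end_mem_support
      (h ▸ q.start_mem_support)⟩
  have hjoin : ((p.mapLe hle).append (.cons hcx (q.mapLe hle))).IsPath := by
    rw [Walk.isPath_def, Walk.support_append, Walk.support_cons, List.tail_cons,
      Walk.support_mapLe_eq_support, Walk.support_mapLe_eq_support]
    exact hp.support_nodup.append hq.support_nodup hpq
  have hcopy := hasCopy_iff_isContained.2 hjoin.isContained_pathGraph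
  rwa [Walk.length_append, Walk.length_cons, Walk.length_mapLe, Walk.length_mapLe] at hcopy

end Copies

namespace BuilderWinsIn

section Rounds

variable {V W : Type*} {G : SimpleGraph V} {H : SimpleGraph W} {R B : Set (Sym2 ℕ)}
  {e : Sym2 ℕ} {r s : ℕ}

lemma of_red (h : HasCopy G R) : BuilderWinsIn G H R B r := by
  cases r with
  | zero => exact .inl h
  | succ r => exact .inl h

lemma of_blue (h : HasCopy H B) : BuilderWinsIn G H R B r := by
  cases r with
  | zero => exact .inr h
  | succ r => exact .inr (.inl h)

lemma succ (h : BuilderWinsIn G H R B r) : BuilderWinsIn G H R B (r + 1) := by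
  induction r generalizing R B with
  | zero => exact h.elim of_red of_blue
  | succ r ih =>
    rcases h with h | h | ⟨e, he, heR, heB, hred, hblue⟩
    · exact of_red h
    · exact of_blue h
    · exact .inr (.inr ⟨e, he, heR, heB, ih hred, ih hblue⟩)

lemma mono (hrs : r ≤ s) (h : BuilderWinsIn G H R B r) : BuilderWinsIn G H R B s :=
  Nat.le_induction h (fun _ _ => succ) s hrs

/-- An edge that is already colored only wastes a round, so `e` need not be fresh. -/
lemma of_edge (he : ¬ e.IsDiag) (hred : BuilderWinsIn G H (insert e R) B r)
    (hblue : BuilderWinsIn G H R (insert e B) r) : BuilderWinsIn G H R B (r + 1) := by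
  by_cases heR : e ∈ R
  · rw [Set.insert_eq_of_mem heR] at hred
    exact hred.succ
  by_cases heB : e ∈ B
  · rw [Set.insert_eq_of_mem heB] at hblue
    exact hblue.succ
  exact .inr (.inr ⟨e, he, heR, heB, hred, hblue⟩)

lemma of_blue_threat (hblue : HasCopy H (insert e B))
    (hred : BuilderWinsIn G H (insert e R) B r) : BuilderWinsIn G H R B (r + 1) := by
  by_cases he : e.IsDiag
  · exact of_blue ((hasCopy_insert_of_isDiag he).1 hblue)
  · exact of_edge he hred (of_blue hblue)

lemma of_blue_threats {L : List (Sym2 ℕ)} (hblue : ∀ e ∈ L, HasCopy H (insert e B))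
    (hred : HasCopy G (R ∪ {e | e ∈ L})) : BuilderWinsIn G H R B L.length := by
  induction L generalizing R with
  | nil => exact of_red (by simpa using hred)
  | cons e L ih =>
    rw [List.forall_mem_cons] at hblue
    have hset : insert e R ∪ {x | x ∈ L} = R ∪ {x | x ∈ e :: L} := by
      ext x
      simp [or_assoc, or_left_comm]
    exact of_blue_threat hblue.1 (ih hblue.2 (hset ▸ hred))

end Rounds

section FourCycle

variable {R B : Set (Sym2 ℕ)} {a c x y : ℕ} {p : (fromEdgeSet B).Walk a c}

lemma four_of_blue_isPath (hp : p.IsPath) (hac : a ≠ c) (hx : x ∉ p.support)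
    (hy : y ∉ p.support) (hxy : x ≠ y) :
    BuilderWinsIn (cycleGraph 4) (pathGraph (p.length + 2)) R B 4 := by
  have join_end {w : ℕ} (hw : w ∉ p.support) :
      HasCopy (pathGraph (p.length + 2)) (insert s(c, w) B) :=
    hasCopy_pathGraph_insert hp (q := .nil' w) .nil (by simpa using hw)
  have join_start {w : ℕ} (hw : w ∉ p.support) :
      HasCopy (pathGraph (p.length + 2)) (insert s(a, w) B) := by
    rw [← p.length_reverse]
    exact hasCopy_pathGraph_insert hp.reverse (q := .nil' w) .nil (by simpa using hw)
  have hnodup : [a, x, c, y].Nodup := by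
    have := p.start_mem_support
    have := p.end_mem_support
    simp only [List.nodup_cons, List.mem_cons, List.not_mem_nil, or_false]
    grind
  refine of_blue_threats (L := [s(a, x), s(c, x), s(c, y), s(a, y)]) ?_
    (hasCopy_cycleGraph_four hnodup ?_ ?_ ?_ ?_)
  · simp only [List.forall_mem_cons]
    exact ⟨join_start hx, join_end hx, join_end hy, join_start hy, List.forall_mem_nil _⟩
  all_goals simp [Sym2.eq_swap]

lemma three_of_disjoint_blue_isPath {q : (fromEdgeSet B).Walk x y} (hp : p.IsPath)
    (hq : q.IsPath) (hpq : p.support.Disjoint q.support) (hac : a ≠ c) (hxy : x ≠ y)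
    (hR : s(a, x) ∈ R) :
    BuilderWinsIn (cycleGraph 4) (pathGraph (p.length + q.length + 2)) R B 3 := by
  have hnodup : [a, x, c, y].Nodup := by
    have := hpq p.start_mem_support
    have := hpq p.end_mem_support
    have := q.start_mem_support
    have := q.end_mem_support
    simp only [List.nodup_cons, List.mem_cons, List.not_mem_nil, or_false]
    grind
  have hcx := hasCopy_pathGraph_insert hp hq hpq
  have hcy := hasCopy_pathGraph_insert hp hq.reverse (by simpa using hpq)
  have hay := hasCopy_pathGraph_insert hp.reverse hq.reverse (by simpa using hpq)
  rw [Walk.length_reverse] at hcy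
  rw [Walk.length_reverse, Walk.length_reverse] at hay
  refine of_blue_threats (L := [s(c, x), s(c, y), s(a, y)]) ?_
    (hasCopy_cycleGraph_four hnodup (.inl hR) ?_ ?_ ?_)
  · simp only [List.forall_mem_cons]
    exact ⟨hcx, hcy, hay, List.forall_mem_nil _⟩
  all_goals simp [Sym2.eq_swap]

end FourCycle

end BuilderWinsIn

section CaseB7

variable {v : Fin 6 → ℕ}

lemma builder_wins_case_B7_of_red (hv : Function.Injective v) :
    BuilderWinsIn (cycleGraph 4) (pathGraph 6)
      (insert s(v 1, v 4) {s(v 1, v 2), s(v 4, v 5)})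
      {s(v 0, v 1), s(v 2, v 3), s(v 3, v 4)} 4 := by
  refine .of_edge (e := s(v 2, v 5)) (by simp [hv.eq_iff]) (.of_red ?_) ?_
  · exact hasCopy_cycleGraph_four (a := v 1) (b := v 2) (c := v 5) (d := v 4)
      (by simp [hv.eq_iff]) (by simp) (by simp) (by simp [Sym2.eq_swap]) (by simp [Sym2.eq_swap])
  · set B : Set (Sym2 ℕ) := insert s(v 2, v 5) {s(v 0, v 1), s(v 2, v 3), s(v 3, v 4)}
    have h01 : (fromEdgeSet B).Adj (v 0) (v 1) := by simp [B, hv.eq_iff]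
    have h23 : (fromEdgeSet B).Adj (v 2) (v 3) := by simp [B, hv.eq_iff]
    have h34 : (fromEdgeSet B).Adj (v 3) (v 4) := by simp [B, hv.eq_iff]
    have h25 : (fromEdgeSet B).Adj (v 2) (v 5) := by simp [B, hv.eq_iff]
    exact .three_of_disjoint_blue_isPath (p := h01.symm.toWalk)
      (q := .cons h34.symm (.cons h23.symm h25.toWalk))
      (by simp [hv.eq_iff]) (by simp [hv.eq_iff]) (by simp [hv.eq_iff])
      (by simp [hv.eq_iff]) (by simp [hv.eq_iff]) (by simp)

lemma builder_wins_case_B7_of_blue (hv : Function.Injective v) :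
    BuilderWinsIn (cycleGraph 4) (pathGraph 6)
      {s(v 1, v 2), s(v 4, v 5)}
      (insert s(v 1, v 4) {s(v 0, v 1), s(v 2, v 3), s(v 3, v 4)}) 4 := by
  set B : Set (Sym2 ℕ) := insert s(v 1, v 4) {s(v 0, v 1), s(v 2, v 3), s(v 3, v 4)}
  have h01 : (fromEdgeSet B).Adj (v 0) (v 1) := by simp [B, hv.eq_iff]
  have h14 : (fromEdgeSet B).Adj (v 1) (v 4) := by simp [B, hv.eq_iff]
  have h23 : (fromEdgeSet B).Adj (v 2) (v 3) := by simp [B, hv.eq_iff]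
  have h34 : (fromEdgeSet B).Adj (v 3) (v 4) := by simp [B, hv.eq_iff]
  obtain ⟨z, hz⟩ := (Set.finite_range v).exists_notMem
  have hzv (i : Fin 6) : z ≠ v i := fun h => hz ⟨i, h.symm⟩
  exact .four_of_blue_isPath (p := .cons h01 (.cons h14 (.cons h34.symm h23.symm.toWalk)))
    (x := v 5) (y := z) (by simp [hv.eq_iff]) (by simp [hv.eq_iff]) (by simp [hv.eq_iff])
    (by simp [hzv]) (hzv 5).symm

end CaseB7

theorem builder_wins_case_B7_general (v : Fin 6 → ℕ) (hv : Function.Injective v) :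
    BuilderWinsIn (cycleGraph 4) (pathGraph 6)
      {s(v 1, v 2), s(v 4, v 5)}
      {s(v 0, v 1), s(v 2, v 3), s(v 3, v 4)} 5 :=
  .of_edge (e := s(v 1, v 4)) (by simp [hv.eq_iff]) (builder_wins_case_B7_of_red hv)
    (builder_wins_case_B7_of_blue hv)

/-- Case `B7`: in the online Ramsey game with targets red `C₄` and blue `P₆`,
from the position in which the five edges `v₁v₂, v₂v₃, v₃v₄, v₄v₅, v₅v₆` of a path on
six distinct vertices have been colored blue, red, blue, blue, red respectively,
Builder can force a red copy of `C₄` or a blue copy of `P₆` within at most 6 additional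
rounds (so within at most 11 rounds in total). -/
theorem builder_wins_case_B7 (v : Fin 6 → ℕ) (hv : Function.Injective v) :
    BuilderWinsIn (cycleGraph 4) (pathGraph 6)
      {s(v 1, v 2), s(v 4, v 5)}
      {s(v 0, v 1), s(v 2, v 3), s(v 3, v 4)} 6 :=
  (builder_wins_case_B7_general v hv).mono (Nat.le_succ 5)
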